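/- arXiv:1412.4259 — 3 statements merged into one kernel-verified Lean document; each statement's English description precedes it below -/
import Mathlib

section
/- There exists a constant c ∈ ℕ such that for every 2-VASS V = (Q,T), every D ∈ ℕ, and every B ∈ {ℕ×[0,D], [0,D]×ℕ}, there exists a finite set Y_B of linear path schemes over V such that: (i) for all states p,q ∈ Q and all u,v ∈ B, p(u) →*_B q(v) holds if and only if p(u) →^{Y_B}_B q(v) holds; (ii) every ρ ∈ Y_B has length at most (|Q| + ‖T‖ + D + 2)^c; and (iii) every ρ ∈ Y_B has at most one cycle. -/
namespace VASS

/-- Integer vectors of dimension `d`. -/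
abbrev Vec (d : ℕ) := Fin d → ℤ

/-- A transition of a `d`-VASS: source state, update vector, target state. -/
abbrev Trans (d : ℕ) := ℕ × Vec d × ℕ

/-- The norm of a vector: maximum of absolute values of its components. -/
def vnorm {d : ℕ} (z : Vec d) : ℕ := Finset.univ.sup fun i => (z i).natAbs

/-- The norm of a transition set. -/
def tnorm {d : ℕ} (T : Finset (Trans d)) : ℕ := T.sup fun t => vnorm t.2.1

/-- The displacement of a word of transitions. -/
def disp {d : ℕ} (π : List (Trans d)) : Vec d := (π.map fun t => t.2.1).sum

/-- `IsPathFrom p q π` : `π` is a path from `p` to `q`. -/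
def IsPathFrom {d : ℕ} : ℕ → ℕ → List (Trans d) → Prop
  | p, q, [] => p = q
  | p, q, t :: rest => t.1 = p ∧ IsPathFrom t.2.2 q rest

/-- ℕ^d as a subset of ℤ^d. -/
def NatSet (d : ℕ) : Set (Vec d) := {v | ∀ i, 0 ≤ v i}

/-- `p(u) →^π_A q(v)`. -/
def Run {d : ℕ} (T : Finset (Trans d)) (A : Set (Vec d)) (p : ℕ) (u : Vec d)
    (q : ℕ) (v : Vec d) (π : List (Trans d)) : Prop :=
  (∀ t ∈ π, t ∈ T) ∧ IsPathFrom p q π ∧ u ∈ A ∧ v = u + disp π ∧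
    ∀ i, 1 ≤ i → i ≤ π.length → u + disp (π.take i) ∈ A

/-- `p(u) →*_A q(v)`. -/
def Reach {d : ℕ} (T : Finset (Trans d)) (A : Set (Vec d)) (p : ℕ) (u : Vec d)
    (q : ℕ) (v : Vec d) : Prop := ∃ π, Run T A p u q v π

/-- A linear path scheme `α₀ β₁* α₁ ⋯ β_k* α_k`, presented as the initial
segment `α₀` together with the list of pairs `(βᵢ, αᵢ)`. -/
abbrev LPS (d : ℕ) := List (Trans d) × List (List (Trans d) × List (Trans d))

/-- The underlying word `α₀ β₁ α₁ ⋯ β_k α_k` of a linear path scheme. -/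
def lpsSupport {d : ℕ} (ρ : LPS d) : List (Trans d) :=
  ρ.1 ++ (ρ.2.map fun s => s.1 ++ s.2).flatten

/-- The length of a linear path scheme. -/
def lpsLen {d : ℕ} (ρ : LPS d) : ℕ := (lpsSupport ρ).length

/-- The number of cycles of a linear path scheme. -/
def numCycles {d : ℕ} (ρ : LPS d) : ℕ := ρ.2.length

/-- `ρ` is a linear path scheme from `p` to `q` over the transition set `T`:
its underlying word uses transitions from `T` and is a path from `p` to `q`,
and each `βᵢ` is a cycle. -/
def IsLPSFrom {d : ℕ} (T : Finset (Trans d)) (p q : ℕ) (ρ : LPS d) : Prop :=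
  (∀ t ∈ lpsSupport ρ, t ∈ T) ∧ IsPathFrom p q (lpsSupport ρ) ∧
    ∀ s ∈ ρ.2, s.1 ≠ [] ∧ ∃ r, IsPathFrom r r s.1

/-- The word `α₀ β₁^{e₁} α₁ ⋯ β_k^{e_k} α_k` of a linear path scheme. -/
def lpsWord {d : ℕ} (ρ : LPS d) (e : List ℕ) : List (Trans d) :=
  ρ.1 ++ (List.zipWith (fun s n => (List.replicate n s.1).flatten ++ s.2) ρ.2 e).flatten

/-- Membership in the language of a linear path scheme. -/
def InLang {d : ℕ} (ρ : LPS d) (π : List (Trans d)) : Prop :=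
  ∃ e : List ℕ, e.length = numCycles ρ ∧ π = lpsWord ρ e

/-- `p(u) →^S_A q(v)` for a finite set `S` of linear path schemes. -/
def SReach {d : ℕ} (T : Finset (Trans d)) (S : Finset (LPS d)) (A : Set (Vec d))
    (p : ℕ) (u : Vec d) (q : ℕ) (v : Vec d) : Prop :=
  ∃ ρ ∈ S, ∃ π, InLang ρ π ∧ Run T A p u q v π

/-- δ(ρ): the set of displacements of words in the language of `ρ`. -/
def DispSet {d : ℕ} (ρ : LPS d) : Set (Vec d) := {z | ∃ π, InLang ρ π ∧ z = disp π}

/-- A quadrant of ℤ². -/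
def IsQuadrant (Z : Set (Vec 2)) : Prop :=
  ∃ ε : Fin 2 → Bool, Z = {v | ∀ i, if ε i then 0 ≤ v i else v i ≤ 0}

/-- A linear path scheme is zigzag-free if the displacements of all its cycles
lie in a single quadrant. -/
def ZigzagFree (ρ : LPS 2) : Prop :=
  ∃ Z, IsQuadrant Z ∧ ∀ s ∈ ρ.2, disp s.1 ∈ Z

/-- The band `ℕ × [0,D]` as a subset of ℤ². -/
def HBand (D : ℕ) : Set (Vec 2) := {v | 0 ≤ v 0 ∧ 0 ≤ v 1 ∧ v 1 ≤ (D : ℤ)}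

/-- The band `[0,D] × ℕ` as a subset of ℤ². -/
def VBand (D : ℕ) : Set (Vec 2) := {v | 0 ≤ v 0 ∧ v 0 ≤ (D : ℤ) ∧ 0 ≤ v 1}

/-!
In a band all coordinates but one are bounded, so they can be stored in the state and only one
nonnegative counter is left. While that counter stays below a threshold, there are finitely many
configurations and loops can be cut out. A stretch of the run between two visits above the
threshold is replaced by a walk `a bᵉ c`: choose two short cycles through states of the stretch
with weights of opposite sign (or one cycle, if all cycles have weights of the same sign) and
shorten the stretch modulo the product of these weights. The lost weight is a multiple of both
cycle weights, hence made up for by iterating the cycle of the right sign. The words `a`, `b` and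
`c` are too short to bring the counter from the threshold to a negative value, and along the
iterations of `b` it moves monotonically between two values that are still high.
-/

section Walks

variable {S S' α G : Type*} {R : S → α → S → Prop} {R' : S' → α → S' → Prop}
  {s s' r : S} {π π₁ π₂ : List α}

/-- `Walk R s s' π`: the word `π` labels a walk from `s` to `s'` in the labelled transition
system `R`. -/
inductive Walk (R : S → α → S → Prop) : S → S → List α → Prop
  | nil (s : S) : Walk R s s []
  | cons {s m s' : S} {a : α} {π : List α} : R s a m → Walk R m s' π → Walk R s s' (a :: π)

theorem Walk.append (h₁ : Walk R s r π₁) (h₂ : Walk R r s' π₂) : Walk R s s' (π₁ ++ π₂) := by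
  induction h₁ with
  | nil => exact h₂
  | cons hstep _ ih => exact .cons hstep (ih h₂)

theorem Walk.map (f : S → S') (hf : ∀ ⦃x a y⦄, R x a y → R' (f x) a (f y))
    (h : Walk R s s' π) : Walk R' (f s) (f s') π := by
  induction h with
  | nil => exact .nil _
  | cons hstep _ ih => exact .cons (hf hstep) ih

theorem Walk.mono {R₁ : S → α → S → Prop} (hR : ∀ ⦃x a y⦄, R x a y → R₁ x a y)
    (h : Walk R s s' π) : Walk R₁ s s' π :=
  h.map id hR

theorem Walk.exists_step (h : Walk R s s' π) : ∀ a ∈ π, ∃ x y, R x a y := by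
  induction h with
  | nil => simp
  | cons hstep _ ih => exact List.forall_mem_cons.2 ⟨⟨_, _, hstep⟩, ih⟩

/-- `Traces R f π`: the states `f 0, f 1, …` are visited, in this order, by a walk labelled `π`.
The values of `f` beyond `π.length` are irrelevant. -/
def Traces (R : S → α → S → Prop) (f : ℕ → S) (π : List α) : Prop :=
  ∀ k (hk : k < π.length), R (f k) π[k] (f (k + 1))

theorem Walk.exists_traces (h : Walk R s s' π) :
    ∃ f : ℕ → S, f 0 = s ∧ f π.length = s' ∧ Traces R f π := by
  induction h with
  | nil s => exact ⟨fun _ => s, rfl, rfl, fun k hk => absurd hk (Nat.not_lt_zero k)⟩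
  | @cons s m s' a π hstep _ ih =>
    obtain ⟨f, hf0, hfl, hf⟩ := ih
    refine ⟨fun k => k.casesOn s f, rfl, hfl, fun k hk => ?_⟩
    cases k with
    | zero => simpa [hf0] using hstep
    | succ k => exact hf k (Nat.lt_of_succ_lt_succ hk)

theorem Traces.walk {f : ℕ → S} (hf : Traces R f π) {i j : ℕ} (hij : i ≤ j)
    (hj : j ≤ π.length) : Walk R (f i) (f j) ((π.take j).drop i) := by
  induction hij using Nat.decreasingInduction with
  | self => simpa using Walk.nil (f j)
  | of_succ i hij ih =>
    have hi : i < (π.take j).length := by simp only [List.length_take]; omega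
    rw [List.drop_eq_getElem_cons hi, List.getElem_take]
    exact .cons (hf i (by omega)) ih

theorem take_append_drop_take {i j : ℕ} (hij : i ≤ j) (π : List α) :
    π.take i ++ (π.take j).drop i = π.take j := by
  simpa [List.take_take, min_eq_left hij] using List.take_append_drop i (π.take j)

/-- The total weight of a word, letter by letter. -/
def weight [AddMonoid G] (w : α → G) (π : List α) : G := (π.map w).sum

@[simp]
theorem weight_nil [AddMonoid G] (w : α → G) : weight w [] = 0 := rfl

@[simp]
theorem weight_cons [AddMonoid G] (w : α → G) (a : α) (π : List α) :
    weight w (a :: π) = w a + weight w π := by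
  simp [weight]

@[simp]
theorem weight_append [AddMonoid G] (w : α → G) (π₁ π₂ : List α) :
    weight w (π₁ ++ π₂) = weight w π₁ + weight w π₂ := by
  simp [weight]

theorem abs_weight_le {w : α → ℤ} {M : ℕ} (hw : ∀ a ∈ π, |w a| ≤ M) :
    |weight w π| ≤ π.length * M := by
  induction π with
  | nil => simp
  | cons a π ih =>
    obtain ⟨ha, hπ⟩ := List.forall_mem_cons.1 hw
    rw [weight_cons, List.length_cons]
    push_cast
    linarith [abs_add_le (w a) (weight w π), ih hπ]

end Walks

section LoopRemoval

variable {S α G : Type*} {R : S → α → S → Prop} {s s' : S} {π : List α} {F : Finset S}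

theorem Walk.exists_cycle_of_card_lt (hF : ∀ ⦃x a y⦄, R x a y → x ∈ F) (h : Walk R s s' π)
    (hcard : F.card < π.length) :
    ∃ r a b c, π = a ++ b ++ c ∧ b ≠ [] ∧ c ≠ [] ∧
      Walk R s r a ∧ Walk R r r b ∧ Walk R r s' c := by
  obtain ⟨f, rfl, rfl, hf⟩ := h.exists_traces
  obtain ⟨i, hi, j, hj, hne, hfij⟩ := Finset.exists_ne_map_eq_of_card_lt_of_maps_to
    (s := Finset.range π.length) (t := F) (by simpa using hcard)
    (fun k hk => hF (hf k (Finset.mem_range.1 hk)))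
  wlog hij : i < j generalizing i j
  · exact this j hj i hi hne.symm hfij.symm (by omega)
  rw [Finset.mem_range] at hi hj
  refine ⟨f i, π.take i, (π.take j).drop i, π.drop j, ?_, ?_, ?_, ?_, ?_, ?_⟩
  · rw [take_append_drop_take hij.le, List.take_append_drop]
  · rw [← List.length_pos_iff, List.length_drop, List.length_take]; omega
  · rw [← List.length_pos_iff, List.length_drop]; omega
  · simpa using hf.walk (Nat.zero_le i) hi.le
  · simpa only [← hfij] using hf.walk hij.le hj.le
  · simpa [hfij] using hf.walk hj.le le_rfl

theorem Walk.exists_length_le_card [AddCommGroup G] (hF : ∀ ⦃x a y⦄, R x a y → x ∈ F)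
    (w : α → G) (A : AddSubmonoid G) (hA : ∀ r b, Walk R r r b → weight w b ∈ A)
    (h : Walk R s s' π) :
    ∃ π', Walk R s s' π' ∧ π'.length ≤ F.card ∧ weight w π - weight w π' ∈ A := by
  induction hn : π.length using Nat.strong_induction_on generalizing π with
  | _ n ih =>
    by_cases hcard : π.length ≤ F.card
    · exact ⟨π, h, hcard, by simp⟩
    obtain ⟨r, a, b, c, rfl, hb, -, hwa, hwb, hwc⟩ := h.exists_cycle_of_card_lt hF (by omega)
    have hlt : (a ++ c).length < n := by
      have := List.length_pos_iff.2 hb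
      simp only [List.length_append] at hn ⊢
      omega
    obtain ⟨π', hπ', hlen, hmem⟩ := ih _ hlt (hwa.append hwc) rfl
    refine ⟨π', hπ', hlen, ?_⟩
    have hsum : weight w (a ++ b ++ c) - weight w π' =
        weight w b + (weight w (a ++ c) - weight w π') := by
      simp only [weight_append]; abel
    exact hsum ▸ A.add_mem (hA r b hwb) hmem

theorem weight_mem_of_forall_short_cycle [AddCommMonoid G] (hF : ∀ ⦃x a y⦄, R x a y → x ∈ F)
    {w : α → G} {A : AddSubmonoid G}
    (hA : ∀ r b, Walk R r r b → b.length ≤ F.card → weight w b ∈ A) (h : Walk R s s π) :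
    weight w π ∈ A := by
  induction hn : π.length using Nat.strong_induction_on generalizing s π with
  | _ n ih =>
    by_cases hcard : π.length ≤ F.card
    · exact hA s π h hcard
    obtain ⟨r, a, b, c, rfl, hb, hc, hwa, hwb, hwc⟩ := h.exists_cycle_of_card_lt hF (by omega)
    have hb' := List.length_pos_iff.2 hb
    have hc' := List.length_pos_iff.2 hc
    simp only [List.length_append] at hn
    have hinner := ih b.length (by omega) hwb rfl
    have houter := ih (a ++ c).length (by rw [List.length_append]; omega) (hwa.append hwc) rfl
    have hsum : weight w (a ++ b ++ c) = weight w b + weight w (a ++ c) := by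
      simp only [weight_append]; abel
    exact hsum ▸ A.add_mem hinner houter

end LoopRemoval

section Counters

variable {S α G : Type*} {R : S → α → S → Prop} {s s' : S} {π : List α} {F : Finset S}

/-- The system `R` extended by a counter with values in `G`, which every step labelled `a`
increases by `w a` and which has to stay inside `I`. -/
def withCounter [Add G] (R : S → α → S → Prop) (w : α → G) (I : Set G) :
    S × G → α → S × G → Prop :=
  fun x a y => R x.1 a y.1 ∧ y.2 = x.2 + w a ∧ x.2 ∈ I ∧ y.2 ∈ I

theorem withCounter.mono [Add G] {w : α → G} {I J : Set G} (hIJ : I ⊆ J) ⦃x : S × G⦄ ⦃a : α⦄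
    ⦃y : S × G⦄ (h : withCounter R w I x a y) : withCounter R w J x a y :=
  ⟨h.1, h.2.1, hIJ h.2.2.1, hIJ h.2.2.2⟩

section AddMonoid

variable [AddMonoid G] {w : α → G} {I : Set G} {x y : S × G}

theorem Walk.to_withCounter (h : Walk R s s' π) {u : G}
    (hI : ∀ i ≤ π.length, u + weight w (π.take i) ∈ I) :
    Walk (withCounter R w I) (s, u) (s', u + weight w π) π := by
  induction h generalizing u with
  | nil s => simpa using Walk.nil (s, u)
  | @cons s m s' a π hstep _ ih =>
    have h0 : u ∈ I := by simpa using hI 0 (Nat.zero_le _)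
    have h1 : u + w a ∈ I := by simpa using hI 1 (by simp)
    have htail := ih (u := u + w a) fun i hi => by
      simpa [add_assoc] using hI (i + 1) (by simpa using hi)
    rw [weight_cons, ← add_assoc]
    exact .cons ⟨hstep, rfl, h0, h1⟩ htail

theorem Walk.of_withCounter (h : Walk (withCounter R w I) x y π) : Walk R x.1 y.1 π :=
  h.map Prod.fst fun _ _ _ hstep => hstep.1

theorem Walk.counter_eq (h : Walk (withCounter R w I) x y π) :
    y.2 = x.2 + weight w π := by
  induction h with
  | nil => simp
  | cons hstep _ ih => rw [ih, hstep.2.1, weight_cons, add_assoc]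

theorem Walk.counter_mem (h : Walk (withCounter R w I) x y π) (hx : x.2 ∈ I) {i : ℕ} :
    x.2 + weight w (π.take i) ∈ I := by
  induction h generalizing i with
  | nil => simpa using hx
  | cons hstep _ ih =>
    cases i with
    | zero => simpa using hx
    | succ i => simpa [hstep.2.1, add_assoc] using ih hstep.2.2.2 (i := i)

end AddMonoid

/-- The counter modulo `m` is made part of the state, so that only cycles of weight divisible by
`m` are removed. -/
theorem Walk.exists_length_le_dvd (hF : ∀ ⦃x a y⦄, R x a y → x ∈ F) (w : α → ℤ)
    (A : AddSubmonoid ℤ) (hA : ∀ r b, Walk R r r b → weight w b ∈ A) (m : ℕ) [NeZero m]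
    (h : Walk R s s' π) :
    ∃ π', Walk R s s' π' ∧ π'.length ≤ F.card * m ∧ weight w π - weight w π' ∈ A ∧
      (m : ℤ) ∣ weight w π - weight w π' := by
  let wm : α → ZMod m := fun a => w a
  have cast_weight (π : List α) : weight wm π = ((weight w π : ℤ) : ZMod m) := by
    induction π with
    | nil => simp
    | cons a π ih => simp [ih, wm]
  have hlift : Walk (withCounter R wm Set.univ) (s, 0) (s', 0 + weight wm π) π :=
    h.to_withCounter fun _ _ => Set.mem_univ _
  obtain ⟨π', hπ', hlen, hmem⟩ := hlift.exists_length_le_card (F := F ×ˢ Finset.univ)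
    (fun _ _ _ hstep => by simpa using hF hstep.1) w A (fun r b hb => hA _ _ hb.of_withCounter)
  refine ⟨π', hπ'.of_withCounter, by simpa [ZMod.card] using hlen, hmem, ?_⟩
  have heq : weight wm π = weight wm π' := by simpa using hπ'.counter_eq
  rw [cast_weight, cast_weight] at heq
  rw [← ZMod.intCast_zmod_eq_zero_iff_dvd, Int.cast_sub, heq, sub_self]

theorem Walk.exists_length_le_of_window {w : α → ℤ} {W : ℕ} {x y : S × ℤ}
    (hF : ∀ ⦃x a y⦄, R x a y → x ∈ F)
    (h : Walk (withCounter R w (Set.Icc 0 W)) x y π) :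
    ∃ π', Walk (withCounter R w (Set.Ici 0)) x y π' ∧ π'.length ≤ F.card * (W + 1) := by
  have hsource ⦃x a y⦄ (hstep : withCounter R w (Set.Icc 0 (W : ℤ)) x a y) :
      x ∈ F ×ˢ Finset.Icc (0 : ℤ) W :=
    Finset.mem_product.2 ⟨hF hstep.1, Finset.mem_Icc.2 hstep.2.2.1⟩
  obtain ⟨π', hπ', hlen, -⟩ :=
    h.exists_length_le_card hsource w ⊤ fun _ _ _ => AddSubmonoid.mem_top _
  refine ⟨π', hπ'.mono (withCounter.mono Set.Icc_subset_Ici_self), ?_⟩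
  simpa [Finset.card_product] using hlen

end Counters

section Lassos

variable {S α : Type*} {R : S → α → S → Prop} {s s' : S} {π : List α} {F : Finset S}
  {w : α → ℤ} {M L : ℕ}

/-- The words `a bᵉ c` label walks from `s` to `s'` in which `b` is a cycle. Unlike the cycles of
a linear path scheme, `b` may be empty. -/
def IsLasso (R : S → α → S → Prop) (s s' : S) (a b c : List α) : Prop :=
  ∃ r, Walk R s r a ∧ Walk R r r b ∧ Walk R r s' c

/-- Some lasso of total length at most `L` can be iterated so as to have weight `z`. -/
def HasLasso (R : S → α → S → Prop) (w : α → ℤ) (s s' : S) (z : ℤ) (L : ℕ) : Prop :=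
  ∃ (a b c : List α) (e : ℕ), IsLasso R s s' a b c ∧
    weight w a + e * weight w b + weight w c = z ∧ a.length + b.length + c.length ≤ L

theorem HasLasso.mono {R' : S → α → S → Prop} (hR : ∀ ⦃x a y⦄, R x a y → R' x a y) {z : ℤ}
    (h : HasLasso R w s s' z L) : HasLasso R' w s s' z L := by
  obtain ⟨a, b, c, e, ⟨r, ha, hb, hc⟩, hz, hlen⟩ := h
  exact ⟨a, b, c, e, ⟨r, ha.mono hR, hb.mono hR, hc.mono hR⟩, hz, hlen⟩

theorem exists_natCast_mul_eq {x z : ℤ} (hdvd : x ∣ z) (hx : x ≠ 0) (hsign : 0 ≤ x * z) :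
    ∃ e : ℕ, e * x = z := by
  obtain ⟨k, rfl⟩ := hdvd
  have hk : 0 ≤ k := by
    rw [← mul_assoc] at hsign
    exact nonneg_of_mul_nonneg_right hsign (mul_self_pos.2 hx)
  exact ⟨k.toNat, by rw [Int.toNat_of_nonneg hk, mul_comm]⟩

theorem Traces.exists_short_segments (hF : ∀ ⦃x a y⦄, R x a y → x ∈ F) {A : AddSubmonoid ℤ}
    (hA : ∀ r b, Walk R r r b → weight w b ∈ A) (m : ℕ) [NeZero m] {f : ℕ → S}
    (hf : Traces R f π) {i j : ℕ} (hij : i ≤ j) (hj : j ≤ π.length) :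
    ∃ a x c, Walk R (f 0) (f i) a ∧ Walk R (f i) (f j) x ∧ Walk R (f j) (f π.length) c ∧
      a.length + x.length + c.length ≤ 3 * (F.card * m) ∧
      weight w π - (weight w a + weight w x + weight w c) ∈ A ∧
      (m : ℤ) ∣ weight w π - (weight w a + weight w x + weight w c) := by
  obtain ⟨a, ha, hla, hAa, hda⟩ :=
    (hf.walk (Nat.zero_le i) (hij.trans hj)).exists_length_le_dvd hF w A hA m
  obtain ⟨x, hx, hlx, hAx, hdx⟩ := (hf.walk hij hj).exists_length_le_dvd hF w A hA m
  obtain ⟨c, hc, hlc, hAc, hdc⟩ := (hf.walk hj le_rfl).exists_length_le_dvd hF w A hA m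
  rw [List.drop_zero] at hAa hda
  rw [List.take_length] at hAc hdc
  have hsum : weight w π - (weight w a + weight w x + weight w c) =
      weight w (π.take i) - weight w a + (weight w ((π.take j).drop i) - weight w x) +
        (weight w (π.drop j) - weight w c) := by
    have hπ : weight w π =
        weight w (π.take i) + weight w ((π.take j).drop i) + weight w (π.drop j) := by
      rw [← weight_append, take_append_drop_take hij, ← weight_append, List.take_append_drop]
    rw [hπ]; ring
  exact ⟨a, x, c, ha, hx, hc, by omega, hsum ▸ A.add_mem (A.add_mem hAa hAx) hAc,
    hsum ▸ dvd_add (dvd_add hda hdx) hdc⟩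

theorem Walk.abs_label_le (hw : ∀ ⦃x a y⦄, R x a y → |w a| ≤ M) (h : Walk R s s' π) :
    ∀ a ∈ π, |w a| ≤ M := fun a ha => by
  obtain ⟨x, y, hstep⟩ := h.exists_step a ha
  exact hw hstep

theorem Walk.natAbs_weight_le (hw : ∀ ⦃x a y⦄, R x a y → |w a| ≤ M) (h : Walk R s s' π)
    {N : ℕ} (hlen : π.length ≤ N) : (weight w π).natAbs ≤ N * M := by
  have habs : |weight w π| ≤ π.length * M := abs_weight_le (h.abs_label_le hw)
  have hNM : (π.length * M : ℤ) ≤ N * M := by gcongr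
  zify
  exact habs.trans hNM

/-- Shortening the segments around the two cycles modulo the product of the cycle weights loses
some `z ∈ A`, which iterating one of the two cycles makes up for. -/
theorem hasLasso_of_cycles (hF : ∀ ⦃x a y⦄, R x a y → x ∈ F)
    (hw : ∀ ⦃x a y⦄, R x a y → |w a| ≤ M) {A : AddSubmonoid ℤ}
    (hA : ∀ r b, Walk R r r b → weight w b ∈ A) {f : ℕ → S} (hf : Traces R f π) {i j : ℕ}
    (hi : i ≤ π.length) (hj : j ≤ π.length) {b₁ b₂ : List α} (hb₁ : Walk R (f i) (f i) b₁)
    (hb₂ : Walk R (f j) (f j) b₂) (hlen₁ : b₁.length ≤ F.card) (hlen₂ : b₂.length ≤ F.card)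
    (hne : weight w b₁ * weight w b₂ ≠ 0)
    (hsign : ∀ z ∈ A, 0 ≤ weight w b₁ * z ∨ 0 ≤ weight w b₂ * z) :
    HasLasso R w (f 0) (f π.length) (weight w π)
      (3 * (F.card * (F.card * M) ^ 2) + F.card) := by
  wlog hij : i ≤ j generalizing i j b₁ b₂
  · rw [mul_comm] at hne
    exact this hj hi hb₂ hb₁ hlen₂ hlen₁ hne (fun z hz => (hsign z hz).symm) (by omega)
  have : NeZero (weight w b₁ * weight w b₂).natAbs := ⟨Int.natAbs_ne_zero.2 hne⟩
  obtain ⟨a, x, c, ha, hx, hc, hlen, hmem, hdvd⟩ := hf.exists_short_segments hF hA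
    (weight w b₁ * weight w b₂).natAbs hij hj
  have hmod : (weight w b₁ * weight w b₂).natAbs ≤ (F.card * M) ^ 2 := by
    rw [Int.natAbs_mul, sq]
    exact Nat.mul_le_mul (hb₁.natAbs_weight_le hw hlen₁) (hb₂.natAbs_weight_le hw hlen₂)
  have hcard := Nat.mul_le_mul_left F.card hmod
  rw [Int.natAbs_dvd] at hdvd
  rcases hsign _ hmem with hsign₁ | hsign₂
  · obtain ⟨e, he⟩ :=
      exists_natCast_mul_eq (dvd_of_mul_right_dvd hdvd) (left_ne_zero_of_mul hne) hsign₁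
    refine ⟨a, b₁, x ++ c, e, ⟨f i, ha, hb₁, hx.append hc⟩, ?_, ?_⟩
    · rw [he, weight_append]; ring
    · rw [List.length_append]; omega
  · obtain ⟨e, he⟩ :=
      exists_natCast_mul_eq (dvd_of_mul_left_dvd hdvd) (right_ne_zero_of_mul hne) hsign₂
    refine ⟨a ++ x, b₂, c, e, ⟨f j, ha.append hx, hb₂, hc⟩, ?_, ?_⟩
    · rw [he, weight_append]; ring
    · rw [List.length_append]; omega

theorem Walk.exists_lt_length_of_ne_nil {f : ℕ → S}
    (hcover : ∀ ⦃x a y⦄, R x a y → ∃ i < π.length, f i = x) {b : List α} (h : Walk R s s b)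
    (hb : b ≠ []) : ∃ i < π.length, f i = s := by
  cases h with
  | nil => exact absurd rfl hb
  | cons hstep _ => exact hcover hstep

theorem hasLasso_of_traces (hF : ∀ ⦃x a y⦄, R x a y → x ∈ F)
    (hw : ∀ ⦃x a y⦄, R x a y → |w a| ≤ M) {f : ℕ → S} (hf : Traces R f π)
    (hcover : ∀ ⦃x a y⦄, R x a y → ∃ i < π.length, f i = x) :
    HasLasso R w (f 0) (f π.length) (weight w π)
      (3 * (F.card * (F.card * M) ^ 2) + F.card) := by
  have hwalk : Walk R (f 0) (f π.length) π := by simpa using hf.walk (Nat.zero_le _) le_rfl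
  have ne_nil {b : List α} (hb : weight w b ≠ 0) : b ≠ [] := by rintro rfl; simp at hb
  by_cases hzero : ∀ r b, Walk R r r b → b.length ≤ F.card → weight w b ∈ (⊥ : AddSubmonoid ℤ)
  · obtain ⟨π', hπ', hlen, hmem⟩ := hwalk.exists_length_le_card hF w ⊥ fun r b hb =>
      weight_mem_of_forall_short_cycle hF hzero hb
    refine ⟨π', [], [], 0, ⟨_, hπ', .nil _, .nil _⟩, ?_, ?_⟩
    · rw [AddSubmonoid.mem_bot, sub_eq_zero] at hmem
      simp [hmem]
    · simp only [List.length_nil]; omega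
  push Not at hzero
  obtain ⟨r, b, hb, hlen, hb0⟩ := hzero
  rw [AddSubmonoid.mem_bot] at hb0
  obtain ⟨i, hi, rfl⟩ := hb.exists_lt_length_of_ne_nil hcover (ne_nil hb0)
  let A : AddSubmonoid ℤ := (AddSubmonoid.nonneg ℤ).comap (AddMonoidHom.mulLeft (weight w b))
  by_cases hsign : ∀ r d, Walk R r r d → d.length ≤ F.card → weight w d ∈ A
  · exact hasLasso_of_cycles hF hw (A := A) (fun r d hd =>
      weight_mem_of_forall_short_cycle hF hsign hd) hf hi.le hi.le hb hb hlen hlen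
      (mul_ne_zero hb0 hb0) fun z hz => .inl hz
  · push Not at hsign
    obtain ⟨r, d, hd, hlen', hopp⟩ := hsign
    replace hopp : weight w b * weight w d < 0 := not_le.1 hopp
    obtain ⟨j, hj, rfl⟩ :=
      hd.exists_lt_length_of_ne_nil hcover (ne_nil (right_ne_zero_of_mul hopp.ne))
    refine hasLasso_of_cycles hF hw (A := ⊤) (fun _ _ _ => AddSubmonoid.mem_top _) hf hi.le hj.le
      hb hd hlen hlen' hopp.ne fun z _ => ?_
    by_contra! hneg
    nlinarith [mul_pos_of_neg_of_neg hneg.1 hneg.2, mul_self_nonneg z]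

/-- All cycles used have to start on the walk, so we restrict `R` to the states it visits. -/
theorem Walk.hasLasso (hF : ∀ ⦃x a y⦄, R x a y → x ∈ F)
    (hw : ∀ ⦃x a y⦄, R x a y → |w a| ≤ M) (h : Walk R s s' π) :
    HasLasso R w s s' (weight w π) (3 * (F.card * (F.card * M) ^ 2) + F.card) := by
  obtain ⟨f, rfl, rfl, hf⟩ := h.exists_traces
  let R' : S → α → S → Prop := fun x a y => R x a y ∧ ∃ i < π.length, f i = x
  have hf' : Traces R' f π := fun k hk => ⟨hf k hk, k, hk, rfl⟩
  have hlasso : HasLasso R' w (f 0) (f π.length) (weight w π) _ :=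
    hasLasso_of_traces (fun _ _ _ hstep => hF hstep.1) (fun _ _ _ hstep => hw hstep.1) hf'
      fun _ _ _ hstep => hstep.2
  exact hlasso.mono fun _ _ _ hstep => hstep.1

end Lassos

section NonnegativeCounter

variable {S α : Type*} {R : S → α → S → Prop} {s s' : S} {π : List α} {F : Finset S}
  {w : α → ℤ} {M L : ℕ} {u : ℤ}

theorem Walk.nonneg_of_le_start (hw : ∀ ⦃x a y⦄, R x a y → |w a| ≤ M) (h : Walk R s s' π)
    (hu : π.length * M ≤ u) :
    Walk (withCounter R w (Set.Ici 0)) (s, u) (s', u + weight w π) π := by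
  refine h.to_withCounter fun i _ => ?_
  have hprefix := abs_le.1 (abs_weight_le (π := π.take i) (w := w) (M := M)
    fun a ha => (h.abs_label_le hw) a (List.mem_of_mem_take ha))
  have hle : ((π.take i).length * M : ℤ) ≤ π.length * M := by
    gcongr; exact List.length_take_le' i π
  rw [Set.mem_Ici]
  linarith

theorem Walk.nonneg_of_le_end (hw : ∀ ⦃x a y⦄, R x a y → |w a| ≤ M) (h : Walk R s s' π)
    (hu : π.length * M ≤ u + weight w π) :
    Walk (withCounter R w (Set.Ici 0)) (s, u) (s', u + weight w π) π := by
  refine h.to_withCounter fun i _ => ?_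
  have hsuffix := abs_le.1 (abs_weight_le (π := π.drop i) (w := w) (M := M)
    fun a ha => (h.abs_label_le hw) a (List.mem_of_mem_drop ha))
  have hle : ((π.drop i).length * M : ℤ) ≤ π.length * M := by
    gcongr; simp
  have hsum : weight w π = weight w (π.take i) + weight w (π.drop i) := by
    rw [← weight_append, List.take_append_drop]
  rw [Set.mem_Ici]
  linarith

theorem Walk.nonneg_iterate (hw : ∀ ⦃x a y⦄, R x a y → |w a| ≤ M) (h : Walk R s s π) (e : ℕ)
    (hstart : π.length * M ≤ u) (hend : π.length * M ≤ u + e * weight w π) :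
    Walk (withCounter R w (Set.Ici 0)) (s, u) (s, u + e * weight w π)
      (List.replicate e π).flatten := by
  induction e generalizing u with
  | zero => simpa using Walk.nil (s, u)
  | succ e ih =>
    push_cast at hend
    have hnext : π.length * M ≤ u + weight w π := by
      rcases le_total 0 (weight w π) with hpos | hneg
      · linarith
      · nlinarith
    have hfirst := h.nonneg_of_le_start hw hstart
    have hrest := ih hnext (by linarith)
    rw [List.replicate_succ, List.flatten_cons]
    convert hfirst.append hrest using 2
    push_cast
    ring

theorem HasLasso.exists_nonneg_walk (hw : ∀ ⦃x a y⦄, R x a y → |w a| ≤ M) {z : ℤ}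
    (h : HasLasso R w s s' z L) (hstart : L * M ≤ u) (hend : L * M ≤ u + z) :
    ∃ (a b c : List α) (e : ℕ), IsLasso R s s' a b c ∧
      Walk (withCounter R w (Set.Ici 0)) (s, u) (s', u + z)
        (a ++ (List.replicate e b).flatten ++ c) ∧
      a.length + b.length + c.length ≤ L := by
  obtain ⟨a, b, c, e, ⟨r, ha, hb, hc⟩, rfl, hlen⟩ := h
  have hwa := abs_le.1 (abs_weight_le (ha.abs_label_le hw))
  have hwc := abs_le.1 (abs_weight_le (hc.abs_label_le hw))
  have hL : (a.length * M + b.length * M + c.length * M : ℤ) ≤ L * M := by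
    rw [← add_mul, ← add_mul]; gcongr; exact_mod_cast hlen
  have hb0 : (0 : ℤ) ≤ b.length * M := by positivity
  have hua := ha.nonneg_of_le_start hw (u := u) (by linarith)
  have hub := hb.nonneg_iterate hw e (u := u + weight w a) (by linarith) (by linarith)
  have huc := hc.nonneg_of_le_end hw (u := u + weight w a + e * weight w b) (by linarith)
  refine ⟨a, b, c, e, ⟨r, ha, hb, hc⟩, ?_, hlen⟩
  convert (hua.append hub).append huc using 2
  ring

theorem Walk.window_or_high (hw : ∀ ⦃x a y⦄, R x a y → |w a| ≤ M) (H : ℕ) {x y : S × ℤ}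
    (h : Walk (withCounter R w (Set.Ici 0)) x y π) :
    Walk (withCounter R w (Set.Icc 0 (H + M))) x y π ∨
      ∃ m₁ m₂ π₁ π₂ π₃, (H : ℤ) ≤ m₁.2 ∧ (H : ℤ) ≤ m₂.2 ∧
        Walk (withCounter R w (Set.Icc 0 (H + M))) x m₁ π₁ ∧
        Walk (withCounter R w (Set.Ici 0)) m₁ m₂ π₂ ∧
        Walk (withCounter R w (Set.Icc 0 (H + M))) m₂ y π₃ := by
  induction h with
  | nil x => exact .inl (.nil x)
  | @cons x m y a π hstep _ ih =>
    obtain ⟨hR, heq, hx0, hm0⟩ := id hstep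
    have hwa := abs_le.1 (hw hR)
    have stay (hx : x.2 ≤ H + M) (hm : m.2 ≤ H + M) :
        withCounter R w (Set.Icc 0 (H + M)) x a m :=
      ⟨hR, heq, ⟨hx0, hx⟩, ⟨hm0, hm⟩⟩
    by_cases hxH : (H : ℤ) ≤ x.2
    · right
      rcases ih with hwin | ⟨m₁, m₂, π₁, π₂, π₃, -, hm₂, hπ₁, hπ₂, hπ₃⟩
      · by_cases hmH : (H : ℤ) ≤ m.2
        · exact ⟨x, m, [], [a], π, hxH, hmH, .nil x, .cons hstep (.nil m), hwin⟩
        · exact ⟨x, x, [], [], a :: π, hxH, hxH, .nil x, .nil x,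
            .cons (stay (by linarith) (by linarith)) hwin⟩
      · have hhigh : Walk (withCounter R w (Set.Ici 0)) x m₂ (a :: (π₁ ++ π₂)) :=
          .cons hstep ((hπ₁.mono (withCounter.mono Set.Icc_subset_Ici_self)).append hπ₂)
        exact ⟨x, m₂, [], _, π₃, hxH, hm₂, .nil x, hhigh, hπ₃⟩
    · have hlow := stay (by linarith) (by linarith)
      rcases ih with hwin | ⟨m₁, m₂, π₁, π₂, π₃, hm₁, hm₂, hπ₁, hπ₂, hπ₃⟩
      · exact .inl (.cons hlow hwin)
      · exact .inr ⟨m₁, m₂, a :: π₁, π₂, π₃, hm₁, hm₂, .cons hlow hπ₁, hπ₂, hπ₃⟩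

theorem lasso_length_le_pow (N M : ℕ) :
    3 * (N * (N * M) ^ 2) + N ≤ (N + M + 2) ^ 7 := by
  set Y := N + M + 2
  have hN : N ≤ Y := by omega
  have hM : M ≤ Y := by omega
  have hcube : N * (N * M) ^ 2 ≤ Y ^ 5 := by
    calc N * (N * M) ^ 2 ≤ Y * (Y * Y) ^ 2 := by gcongr
      _ = Y ^ 5 := by ring
  have hlin : N ≤ Y ^ 5 := hN.trans (Nat.le_self_pow (by norm_num) Y)
  calc 3 * (N * (N * M) ^ 2) + N ≤ 2 ^ 2 * Y ^ 5 := by omega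
    _ ≤ Y ^ 2 * Y ^ 5 := by gcongr; omega
    _ = Y ^ 7 := by ring

theorem window_length_le_pow (N M : ℕ) :
    2 * (N * ((N + M + 2) ^ 8 + M + 1)) + (N + M + 2) ^ 7 ≤ (N + M + 2) ^ 12 := by
  set Y := N + M + 2
  have hN : N ≤ Y := by omega
  have hM : M + 1 ≤ Y ^ 8 := (show M + 1 ≤ Y by omega).trans (Nat.le_self_pow (by norm_num) Y)
  have hlow : Y ^ 7 ≤ Y ^ 9 := Nat.pow_le_pow_right (by omega) (by norm_num)
  have hhigh : N * (Y ^ 8 + M + 1) ≤ 2 * Y ^ 9 := by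
    calc N * (Y ^ 8 + M + 1) ≤ Y * (Y ^ 8 + Y ^ 8) := Nat.mul_le_mul hN (by omega)
      _ = 2 * Y ^ 9 := by ring
  calc 2 * (N * (Y ^ 8 + M + 1)) + Y ^ 7 ≤ 2 ^ 3 * Y ^ 9 := by omega
    _ ≤ Y ^ 3 * Y ^ 9 := by gcongr; omega
    _ = Y ^ 12 := by ring

/-- Above the threshold `H`, a lasso cannot make the counter negative; below it, the counter is
bounded and loops can be removed. -/
theorem Walk.exists_nonneg_lasso (hF : ∀ ⦃x a y⦄, R x a y → x ∈ F)
    (hw : ∀ ⦃x a y⦄, R x a y → |w a| ≤ M) {x y : S × ℤ}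
    (h : Walk (withCounter R w (Set.Ici 0)) x y π) :
    ∃ (a b c : List α) (e : ℕ), IsLasso R x.1 y.1 a b c ∧
      Walk (withCounter R w (Set.Ici 0)) x y (a ++ (List.replicate e b).flatten ++ c) ∧
      a.length + b.length + c.length ≤ (F.card + M + 2) ^ 12 := by
  set L := 3 * (F.card * (F.card * M) ^ 2) + F.card
  set H := (F.card + M + 2) ^ 8 with hH
  have hLpow : L ≤ (F.card + M + 2) ^ 7 := lasso_length_le_pow F.card M
  have hbound : 2 * (F.card * (H + M + 1)) + (F.card + M + 2) ^ 7 ≤ (F.card + M + 2) ^ 12 :=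
    window_length_le_pow F.card M
  have hLH : (L * M : ℤ) ≤ H := by
    rw [hH, pow_succ]
    exact_mod_cast Nat.mul_le_mul hLpow (show M ≤ F.card + M + 2 by omega)
  rcases h.window_or_high hw H with hwin | ⟨m₁, m₂, π₁, π₂, π₃, hm₁, hm₂, hπ₁, hπ₂, hπ₃⟩
  · obtain ⟨π', hπ', hlen⟩ := Walk.exists_length_le_of_window (W := H + M) hF (mod_cast hwin)
    refine ⟨π', [], [], 0, ⟨y.1, hπ'.of_withCounter, .nil _, .nil _⟩, by simpa using hπ', ?_⟩
    simp only [List.length_nil]; omega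
  · obtain ⟨p, hp, hplen⟩ := Walk.exists_length_le_of_window (W := H + M) hF (mod_cast hπ₁)
    obtain ⟨q, hq, hqlen⟩ := Walk.exists_length_le_of_window (W := H + M) hF (mod_cast hπ₃)
    have hend := hπ₂.counter_eq
    obtain ⟨a, b, c, e, ⟨r, ha, hb, hc⟩, habc, hlen⟩ :=
      (hπ₂.of_withCounter.hasLasso hF hw).exists_nonneg_walk hw (u := m₁.2)
        (hLH.trans hm₁) (hend ▸ hLH.trans hm₂)
    rw [← hend] at habc
    refine ⟨p ++ a, b, c ++ q, e,
      ⟨r, hp.of_withCounter.append ha, hb, hc.append hq.of_withCounter⟩, ?_, ?_⟩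
    · simpa only [List.append_assoc] using hp.append (habc.append hq)
    · simp only [List.length_append]; omega

end NonnegativeCounter

section Bands

variable {d : ℕ} {T : Finset (Trans d)} {p q : ℕ} {π : List (Trans d)} {u v : Vec d} {i : Fin d}
  {D : ℕ}

/-- The control graph of the VASS with transitions `T`, as a labelled transition system. -/
def transStep (T : Finset (Trans d)) : ℕ → Trans d → ℕ → Prop :=
  fun p t q => t ∈ T ∧ t.1 = p ∧ t.2.2 = q

theorem walk_transStep_iff :
    Walk (transStep T) p q π ↔ (∀ t ∈ π, t ∈ T) ∧ IsPathFrom p q π := by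
  constructor
  · intro h
    induction h with
    | nil => exact ⟨by simp, rfl⟩
    | cons hstep _ ih =>
      obtain ⟨ht, rfl, rfl⟩ := hstep
      exact ⟨List.forall_mem_cons.2 ⟨ht, ih.1⟩, rfl, ih.2⟩
  · rintro ⟨hT, hpath⟩
    induction π generalizing p with
    | nil => cases hpath; exact .nil _
    | cons t π ih =>
      obtain ⟨ht, hπ⟩ := List.forall_mem_cons.1 hT
      exact .cons ⟨ht, hpath.1, rfl⟩ (ih hπ hpath.2)

theorem run_iff_walk {A : Set (Vec d)} :
    Run T A p u q v π ↔
      u ∈ A ∧ Walk (withCounter (transStep T) (fun t => t.2.1) A) (p, u) (q, v) π := by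
  constructor
  · rintro ⟨hT, hpath, hu, rfl, hA⟩
    refine ⟨hu, (walk_transStep_iff.2 ⟨hT, hpath⟩).to_withCounter fun k hk => ?_⟩
    rcases k.eq_zero_or_pos with rfl | hpos
    · simpa using hu
    · exact hA k hpos hk
  · rintro ⟨hu, h⟩
    obtain ⟨hT, hpath⟩ := walk_transStep_iff.1 h.of_withCounter
    exact ⟨hT, hpath, hu, h.counter_eq, fun k _ _ => h.counter_mem hu⟩

/-- The vectors with coordinate `i` in `ℕ` and all other coordinates in `[0, D]`. -/
def band (i : Fin d) (D : ℕ) : Set (Vec d) :=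
  {v | 0 ≤ v i ∧ ∀ k ≠ i, v k ∈ Set.Icc 0 (D : ℤ)}

theorem hBand_eq_band (D : ℕ) : HBand D = band 0 D := by
  ext v
  simp [HBand, band, Fin.forall_fin_two]

theorem vBand_eq_band (D : ℕ) : VBand D = band 1 D := by
  ext v
  simp only [VBand, band, Set.mem_ofPred_eq, Set.mem_Icc, Fin.forall_fin_two]
  grind

theorem update_zero_mem_Icc (hv : v ∈ band i D) :
    Function.update v i 0 ∈ Set.Icc 0 fun _ => (D : ℤ) := by
  rw [← Set.pi_univ_Icc]
  intro k _
  rcases eq_or_ne k i with rfl | hk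
  · simp
  · simpa [hk] using hv.2 k hk

theorem update_mem_band (hv : v ∈ Set.Icc 0 fun _ => (D : ℤ)) {n : ℤ} (hn : 0 ≤ n) :
    Function.update v i n ∈ band i D :=
  ⟨by simpa using hn, fun k hk => by simpa [hk] using ⟨hv.1 k, hv.2 k⟩⟩

/-- The control graph in which the coordinates other than `i` are part of the state and range over
`[0, D]`. Coordinate `i` of the stored vector is a placeholder that no step changes. -/
def controlStep (T : Finset (Trans d)) (i : Fin d) (D : ℕ) :
    ℕ × Vec d → Trans d → ℕ × Vec d → Prop :=
  withCounter (transStep T) (fun t => Function.update t.2.1 i 0) (Set.Icc 0 fun _ => (D : ℤ))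

theorem walk_controlStep_iff :
    Walk (withCounter (controlStep T i D) (fun t => t.2.1 i) (Set.Ici 0))
        ((p, Function.update u i 0), u i) ((q, Function.update v i 0), v i) π ↔
      Walk (withCounter (transStep T) (fun t => t.2.1) (band i D)) (p, u) (q, v) π := by
  constructor
  · intro h
    have merge := h.map (fun x => (x.1.1, Function.update x.1.2 i x.2))
      (R' := withCounter (transStep T) (fun t => t.2.1) (band i D)) ?_
    · simpa using merge
    rintro ⟨⟨p, x⟩, m⟩ t ⟨⟨q, y⟩, n⟩ ⟨⟨hstep, rfl, hx, hy⟩, rfl, hm, hn⟩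
    exact ⟨hstep, by simp [Function.update_add], update_mem_band hx hm, update_mem_band hy hn⟩
  · intro h
    refine h.map (fun x => ((x.1, Function.update x.2 i 0), x.2 i)) ?_
    rintro ⟨p, x⟩ t ⟨q, y⟩ ⟨hstep, rfl, hx, hy⟩
    exact ⟨⟨hstep, by simp [← Function.update_add], update_zero_mem_Icc hx,
      update_zero_mem_Icc hy⟩, rfl, hx.1, hy.1⟩

theorem abs_apply_le_tnorm {t : Trans d} (ht : t ∈ T) (i : Fin d) : |t.2.1 i| ≤ tnorm T := by
  have hcoord : (t.2.1 i).natAbs ≤ vnorm t.2.1 :=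
    Finset.le_sup (f := fun k => (t.2.1 k).natAbs) (Finset.mem_univ i)
  have hnorm : vnorm t.2.1 ≤ tnorm T := Finset.le_sup (f := fun t : Trans d => vnorm t.2.1) ht
  zify at hcoord
  exact hcoord.trans (mod_cast hnorm)

theorem card_add_le_pow (d n m D : ℕ) : n * (D + 1) ^ d + m + 2 ≤ (n + m + D + 2) ^ (d + 2) := by
  set X := n + m + D + 2
  have hcard : n * (D + 1) ^ d ≤ X * X ^ d := by gcongr <;> omega
  have hlin : m + 2 ≤ X * X ^ d :=
    (show m + 2 ≤ X by omega).trans (Nat.le_mul_of_pos_right X (pow_pos (by omega) d))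
  calc n * (D + 1) ^ d + m + 2 ≤ 2 * (X * X ^ d) := by omega
    _ ≤ X * (X * X ^ d) := by gcongr; omega
    _ = X ^ (d + 2) := by ring

theorem exists_lasso_of_walk_band {Q : Finset ℕ} (hQ : ∀ t ∈ T, t.1 ∈ Q)
    (h : Walk (withCounter (transStep T) (fun t => t.2.1) (band i D)) (p, u) (q, v) π) :
    ∃ (a b c : List (Trans d)) (e : ℕ), IsLasso (transStep T) p q a b c ∧
      Walk (withCounter (transStep T) (fun t => t.2.1) (band i D)) (p, u) (q, v)
        (a ++ (List.replicate e b).flatten ++ c) ∧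
      a.length + b.length + c.length ≤ (Q.card + tnorm T + D + 2) ^ ((d + 2) * 12) := by
  have hsource ⦃x t y⦄ (hstep : controlStep T i D x t y) :
      x ∈ Q ×ˢ Finset.Icc (0 : Vec d) fun _ => (D : ℤ) :=
    Finset.mem_product.2 ⟨hstep.1.2.1 ▸ hQ t hstep.1.1, Finset.mem_Icc.2 hstep.2.2.1⟩
  have hcard : (Q ×ˢ Finset.Icc (0 : Vec d) fun _ => (D : ℤ)).card = Q.card * (D + 1) ^ d := by
    simp [Pi.card_Icc]
  obtain ⟨a, b, c, e, ⟨r, ha, hb, hc⟩, hwalk, hlen⟩ :=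
    (walk_controlStep_iff.2 h).exists_nonneg_lasso hsource
      fun _ _ _ hstep => abs_apply_le_tnorm hstep.1.1 i
  refine ⟨a, b, c, e, ⟨r.1, ha.of_withCounter, hb.of_withCounter, hc.of_withCounter⟩,
    walk_controlStep_iff.1 hwalk, hlen.trans ?_⟩
  rw [hcard, pow_mul]
  exact Nat.pow_le_pow_left (card_add_le_pow d Q.card (tnorm T) D) 12

end Bands

section Schemes

variable {d : ℕ} {T : Finset (Trans d)} {p q : ℕ} {a b c : List (Trans d)}

theorem finite_words_length_le {α : Type*} {A : Set α} (hA : A.Finite) (n : ℕ) :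
    {π : List α | (∀ t ∈ π, t ∈ A) ∧ π.length ≤ n}.Finite := by
  have := hA.to_subtype
  refine ((List.finite_length_le A n).image (List.map (↑))).subset ?_
  rintro π ⟨hπ, hlen⟩
  lift π to List A using hπ
  exact ⟨π, by simpa using hlen, rfl⟩

theorem finite_schemes_length_le (T : Finset (Trans d)) (n k : ℕ) :
    {ρ : LPS d | (∃ p q, IsLPSFrom T p q ρ) ∧ lpsLen ρ ≤ n ∧ numCycles ρ ≤ k}.Finite := by
  have hwords := finite_words_length_le T.finite_toSet n
  refine (hwords.prod (finite_words_length_le (hwords.prod hwords) k)).subset ?_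
  rintro ⟨α₀, L⟩ ⟨⟨p, q, hT, -, -⟩, hlen, hk⟩
  have short_of_infix {π : List (Trans d)} (hπ : π <:+: lpsSupport (α₀, L)) :
      (∀ t ∈ π, t ∈ (T : Set (Trans d))) ∧ π.length ≤ n :=
    ⟨fun t ht => hT t (hπ.subset ht), hπ.length_le.trans hlen⟩
  refine ⟨short_of_infix (List.prefix_append _ _).isInfix, fun s hs => ?_, hk⟩
  have hseg : s.1 ++ s.2 <:+: lpsSupport (α₀, L) :=
    (List.infix_of_mem_flatten (List.mem_map_of_mem (f := fun s => s.1 ++ s.2) hs)).trans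
      (List.suffix_append _ _).isInfix
  exact ⟨short_of_infix ((List.prefix_append _ _).isInfix.trans hseg),
    short_of_infix ((List.suffix_append _ _).isInfix.trans hseg)⟩

theorem IsLasso.exists_scheme (h : IsLasso (transStep T) p q a b c) (e : ℕ) :
    ∃ ρ : LPS d, IsLPSFrom T p q ρ ∧ InLang ρ (a ++ (List.replicate e b).flatten ++ c) ∧
      lpsLen ρ = a.length + b.length + c.length ∧ numCycles ρ ≤ 1 := by
  obtain ⟨r, ha, hb, hc⟩ := h
  rcases eq_or_ne b [] with rfl | hne
  · obtain ⟨hT, hpath⟩ := walk_transStep_iff.1 (ha.append hc)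
    refine ⟨(a ++ c, []), ?_, ⟨[], rfl, ?_⟩, ?_, zero_le_one⟩
    · simpa only [IsLPSFrom, lpsSupport, List.map_nil, List.flatten_nil, List.append_nil] using
        ⟨hT, hpath, by simp⟩
    · simp [lpsWord]
    · simp [lpsLen, lpsSupport]
  · obtain ⟨hT, hpath⟩ := walk_transStep_iff.1 (ha.append (hb.append hc))
    have hcycle := (walk_transStep_iff.1 hb).2
    refine ⟨(a, [(b, c)]), ?_, ⟨[e], rfl, ?_⟩, ?_, le_rfl⟩
    · simpa only [IsLPSFrom, lpsSupport, List.map_singleton, List.flatten_singleton,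
        List.forall_mem_singleton] using ⟨hT, hpath, hne, r, hcycle⟩
    · simp [lpsWord]
    · simp [lpsLen, lpsSupport, add_assoc]

end Schemes

theorem statement11_general (d : ℕ) :
    ∃ c : ℕ, ∀ (Q : Finset ℕ) (T : Finset (Trans d)),
      (∀ t ∈ T, t.1 ∈ Q ∧ t.2.2 ∈ Q) →
      ∀ (D : ℕ) (i : Fin d),
      ∃ Y : Finset (LPS d),
        (∀ ρ ∈ Y, ∃ p q, IsLPSFrom T p q ρ) ∧
        (∀ p q u v, Reach T (band i D) p u q v ↔ SReach T Y (band i D) p u q v) ∧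
        (∀ ρ ∈ Y, lpsLen ρ ≤ (Q.card + tnorm T + D + 2) ^ c) ∧
        (∀ ρ ∈ Y, numCycles ρ ≤ 1) := by
  refine ⟨(d + 2) * 12, fun Q T hQ D i => ?_⟩
  have hfin := finite_schemes_length_le T ((Q.card + tnorm T + D + 2) ^ ((d + 2) * 12)) 1
  refine ⟨hfin.toFinset, fun ρ hρ => (hfin.mem_toFinset.1 hρ).1, fun p q u v => ⟨?_, ?_⟩,
    fun ρ hρ => (hfin.mem_toFinset.1 hρ).2.1, fun ρ hρ => (hfin.mem_toFinset.1 hρ).2.2⟩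
  · rintro ⟨π, hπ⟩
    obtain ⟨hu, hwalk⟩ := run_iff_walk.1 hπ
    obtain ⟨a, b, c, e, hlasso, hrun, hlen⟩ :=
      exists_lasso_of_walk_band (fun t ht => (hQ t ht).1) hwalk
    obtain ⟨ρ, hρ, hlang, hρlen, hcycles⟩ := hlasso.exists_scheme e
    exact ⟨ρ, hfin.mem_toFinset.2 ⟨⟨p, q, hρ⟩, hρlen ▸ hlen, hcycles⟩, _, hlang,
      run_iff_walk.2 ⟨hu, hrun⟩⟩
  · rintro ⟨-, -, π, -, hπ⟩
    exact ⟨π, hπ⟩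

/-- Reachability of a 2-VASS restricted to a band
`B ∈ {ℕ×[0,D], [0,D]×ℕ}` is captured by a finite set of linear path schemes of
polynomial length with at most one cycle. -/
theorem statement11 :
    ∃ c : ℕ, ∀ (Q : Finset ℕ) (T : Finset (Trans 2)),
      (∀ t ∈ T, t.1 ∈ Q ∧ t.2.2 ∈ Q) →
      ∀ D : ℕ, ∀ B : Set (Vec 2), (B = HBand D ∨ B = VBand D) →
      ∃ Y : Finset (LPS 2),
        (∀ ρ ∈ Y, ∃ p q, IsLPSFrom T p q ρ) ∧
        (∀ p ∈ Q, ∀ q ∈ Q, ∀ u v : Vec 2, u ∈ B → v ∈ B →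
          (Reach T B p u q v ↔ SReach T Y B p u q v)) ∧
        (∀ ρ ∈ Y, lpsLen ρ ≤ (Q.card + tnorm T + D + 2) ^ c) ∧
        (∀ ρ ∈ Y, numCycles ρ ≤ 1) := by
  obtain ⟨c, hc⟩ := statement11_general 2
  refine ⟨c, fun Q T hQ D B hB => ?_⟩
  obtain ⟨i, rfl⟩ : ∃ i, B = band i D :=
    hB.elim (fun h => ⟨0, h.trans (hBand_eq_band D)⟩) fun h => ⟨1, h.trans (vBand_eq_band D)⟩
  obtain ⟨Y, hscheme, hreach, hlen, hcycles⟩ := hc Q T hQ D i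
  exact ⟨Y, hscheme, fun p _ q _ u v _ _ => hreach p q u v, hlen, hcycles⟩

end VASS
end

section
/- There exists a constant c₀ ∈ ℕ such that for all d, k ≥ 1, every integer matrix A ∈ ℤ^{d×k}, and every c ∈ ℤ^d: if there exists x ∈ ℕ^k with A·x = c, then there exists e ∈ ℕ^k with A·e = c and ‖e‖ ≤ (‖A‖ + ‖c‖ + 1)^{c₀·d}. -/
namespace ILP

/-- The norm of a vector of integers: maximum of absolute values. -/
def vnorm {m : ℕ} (v : Fin m → ℤ) : ℕ := Finset.univ.sup fun i => (v i).natAbs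

/-- The norm of an integer matrix: number of columns times the maximal
absolute value of an entry. -/
def mnorm {d k : ℕ} (A : Matrix (Fin d) (Fin k) ℤ) : ℕ :=
  k * Finset.univ.sup fun p : Fin d × Fin k => (A p.1 p.2).natAbs

/-!
Fix `a ≥ 1` bounding the entries of the `m × n` matrix `A`. Among all solutions over `ℕ` take the
lexicographically least one, `e`. It is not the midpoint of two other solutions, so no nonzero
kernel vector `y` of `A` satisfies `|y| ≤ e`.

Let `B` consist of the columns of `A` at which `e` exceeds `(n a) ^ m`. A maximal independent set of
rows of `B` has the same kernel as `B`. If it has fewer rows than columns, Siegel's lemma yields a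
nonzero kernel vector of `B` with entries at most `(n a) ^ m`, which the choice of `e` forbids.
So it has at least as many rows as columns, and Siegel's lemma, applied to its transpose with the
column `j` left out, yields a small combination of the rows that is a nonzero multiple of the `j`-th
unit vector. Hence `|x j|` is at most `(n a) ^ m` times the norm of `B x`, for every `x`. For `x`
the restriction of `e`, the vector `B x` is `c` minus the contribution of the small coordinates
of `e`.
-/

open Matrix

theorem exists_mem_forall_add_eq_add_self {ι α : Type*} [Finite ι] [AddCommMonoid α] [LinearOrder α]
    [IsOrderedCancelAddMonoid α] [WellFoundedLT α] {P : Set (ι → α)} (hP : P.Nonempty) :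
    ∃ x ∈ P, ∀ z ∈ P, ∀ w ∈ P, z + w = x + x → z = x := by
  have := Fintype.ofFinite ι
  let : LinearOrder ι := LinearOrder.lift' (Fintype.equivFin ι) (Fintype.equivFin ι).injective
  obtain ⟨x, hx, hmin⟩ := (wellFounded_lt (α := Lex (ι → α))).has_min (ofLex ⁻¹' P) hP
  refine ⟨ofLex x, hx, fun z hz w hw hzw => ?_⟩
  have hxz : x ≤ toLex z := not_lt.1 (hmin (toLex z) hz)
  have hxw : x ≤ toLex w := not_lt.1 (hmin (toLex w) hw)
  exact ((add_eq_add_iff_eq_and_eq hxz hxw).1 hzw.symm).1.symm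

section IntegerMatrix

variable {m n : Type*} [Fintype n] {a b : ℕ}

theorem exists_solution_forall_ker_eq_zero (A : Matrix m n ℤ) {c : m → ℤ}
    (h : ∃ x : n → ℕ, A *ᵥ (fun j => (x j : ℤ)) = c) :
    ∃ e : n → ℕ, A *ᵥ (fun j => (e j : ℤ)) = c ∧
      ∀ y : n → ℤ, A *ᵥ y = 0 → (∀ j, |y j| ≤ e j) → y = 0 := by
  obtain ⟨e, he, hmid⟩ :=
    exists_mem_forall_add_eq_add_self (P := {x : n → ℕ | A *ᵥ (fun j => (x j : ℤ)) = c}) h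
  refine ⟨e, he, fun y hy hye => ?_⟩
  have lift_add (y : n → ℤ) (hy : A *ᵥ y = 0) (hye : ∀ j, |y j| ≤ e j) :
      ∃ z : n → ℕ, A *ᵥ (fun j => (z j : ℤ)) = c ∧ ∀ j, (z j : ℤ) = e j + y j := by
    have hz j : 0 ≤ (e j : ℤ) + y j := by linarith [neg_le_of_abs_le (hye j)]
    choose z hz using fun j => Int.eq_ofNat_of_zero_le (hz j)
    refine ⟨z, ?_, fun j => (hz j).symm⟩
    rw [← add_zero c, ← he, ← hy, ← mulVec_add]
    exact congrArg (A *ᵥ ·) (funext fun j => (hz j).symm)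
  obtain ⟨z, hAz, hz⟩ := lift_add y hy hye
  obtain ⟨w, hAw, hw⟩ := lift_add (-y) (by rw [mulVec_neg, hy, neg_zero]) (by simpa using hye)
  have hze : z = e := hmid z hAz w hAw <| funext fun j => by
    have := hz j
    have := hw j
    simp only [Pi.add_apply, Pi.neg_apply] at *
    omega
  funext j
  simpa [hze] using hz j

attribute [local instance] Matrix.seminormedAddCommGroup in
theorem exists_ne_zero_mulVec_eq_zero_of_card_lt [Fintype m] {A : Matrix m n ℤ} (ha : 1 ≤ a)
    (hA : ∀ i j, |A i j| ≤ a) (hcard : Fintype.card m < Fintype.card n) :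
    ∃ y : n → ℤ, y ≠ 0 ∧ A *ᵥ y = 0 ∧
      ∀ j, |y j| ≤ ((Fintype.card n * a) ^ Fintype.card m : ℤ) := by
  rcases Nat.eq_zero_or_pos (Fintype.card m) with hm | hm
  · have := Fintype.card_eq_zero_iff.1 hm
    have : Nonempty n := Fintype.card_pos_iff.1 (by omega)
    exact ⟨1, one_ne_zero, Subsingleton.elim _ _, by simp⟩
  obtain ⟨y, hy0, hAy, hy⟩ := Int.Matrix.exists_ne_zero_int_vec_norm_le A hcard hm
  refine ⟨y, hy0, hAy, fun j => ?_⟩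
  have hnorm : max 1 ‖A‖ ≤ (a : ℝ) := by
    refine max_le (by exact_mod_cast ha) ((Matrix.norm_le_iff (Nat.cast_nonneg a)).2 fun i j => ?_)
    rw [Int.norm_eq_abs]
    exact_mod_cast hA i j
  have hgap : (1 : ℝ) ≤ Fintype.card n - Fintype.card m := by
    rw [le_sub_iff_add_le']
    exact_mod_cast hcard
  have hbase : (1 : ℝ) ≤ Fintype.card n * a := by
    exact_mod_cast Nat.mul_pos (hm.trans hcard) ha
  have hyj : (|y j| : ℝ) ≤ (Fintype.card n * a : ℝ) ^ Fintype.card m :=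
    calc (|y j| : ℝ) = ‖y j‖ := (Int.norm_eq_abs _).symm
      _ ≤ ‖y‖ := norm_le_pi_norm y j
      _ ≤ _ := hy
      _ ≤ (Fintype.card n * a : ℝ) ^
            ((Fintype.card m : ℝ) / (Fintype.card n - Fintype.card m)) := by gcongr
      _ ≤ (Fintype.card n * a : ℝ) ^ (Fintype.card m : ℝ) :=
          Real.rpow_le_rpow_of_exponent_le hbase (div_le_self (Nat.cast_nonneg _) hgap)
      _ = _ := Real.rpow_natCast _ _
  exact_mod_cast hyj

theorem exists_vecMul_eq_single [Fintype m] [DecidableEq n] {A : Matrix m n ℤ} (ha : 1 ≤ a)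
    (hA : ∀ i j, |A i j| ≤ a) (hli : LinearIndependent ℤ A.row)
    (hcard : Fintype.card n ≤ Fintype.card m) (j : n) :
    ∃ g : m → ℤ, (∃ D ≠ 0, g ᵥ* A = Pi.single j D) ∧
      ∀ i, |g i| ≤ ((Fintype.card m * a) ^ (Fintype.card n - 1) : ℤ) := by
  have hcard_ne : Fintype.card {s // s ≠ j} = Fintype.card n - 1 := by simp
  have hpos : 0 < Fintype.card n := Fintype.card_pos_iff.2 ⟨j⟩
  obtain ⟨g, hg0, hgA, hg⟩ := exists_ne_zero_mulVec_eq_zero_of_card_lt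
    (A := (A.submatrix id (Subtype.val : {s // s ≠ j} → n))ᵀ) ha (fun _ _ => hA _ _) (by omega)
  rw [hcard_ne] at hg
  have hsingle : g ᵥ* A = Pi.single j ((g ᵥ* A) j) := by
    funext s
    rcases eq_or_ne s j with rfl | hs
    · rw [Pi.single_eq_same]
    · rw [Pi.single_eq_of_ne hs]
      rw [mulVec_transpose] at hgA
      exact congrFun hgA ⟨s, hs⟩
  refine ⟨g, ⟨(g ᵥ* A) j, fun hD => hg0 ?_, hsingle⟩, hg⟩
  rw [hD, Pi.single_zero] at hsingle
  exact vecMul_injective_iff.2 hli (hsingle.trans (zero_vecMul A).symm)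

theorem abs_dotProduct_le {R : Type*} [CommRing R] [LinearOrder R] [IsStrictOrderedRing R]
    {v w : n → R} {p q : R} (hv : ∀ i, |v i| ≤ p) (hw : ∀ i, |w i| ≤ q) :
    |v ⬝ᵥ w| ≤ Fintype.card n * (p * q) :=
  calc |v ⬝ᵥ w| ≤ ∑ i, |v i * w i| := Finset.abs_sum_le_sum_abs _ _
    _ ≤ Fintype.card n • (p * q) := Finset.sum_le_card_nsmul _ _ _ fun i _ => by
        rw [abs_mul]
        exact mul_le_mul (hv i) (hw i) (abs_nonneg _) ((abs_nonneg _).trans (hv i))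
    _ = _ := nsmul_eq_mul _ _

theorem abs_le_of_linearIndependent_row [Fintype m] {A : Matrix m n ℤ} (ha : 1 ≤ a)
    (hA : ∀ i j, |A i j| ≤ a) (hli : LinearIndependent ℤ A.row)
    (hcard : Fintype.card n ≤ Fintype.card m) {x : n → ℤ} (hx : ∀ i, |(A *ᵥ x) i| ≤ b) (j : n) :
    |x j| ≤ ((Fintype.card m * a) ^ Fintype.card n * b : ℤ) := by
  classical
  obtain ⟨g, ⟨D, hD, hgA⟩, hg⟩ := exists_vecMul_eq_single ha hA hli hcard j
  have hDx : D * x j = g ⬝ᵥ A *ᵥ x := by rw [dotProduct_mulVec, hgA, single_dotProduct]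
  have hn : Fintype.card n - 1 + 1 = Fintype.card n :=
    Nat.sub_add_cancel (Fintype.card_pos_iff.2 ⟨j⟩)
  have ha' : (1 : ℤ) ≤ a := by exact_mod_cast ha
  calc |x j| ≤ |D| * |x j| := le_mul_of_one_le_left (abs_nonneg _) (Int.one_le_abs hD)
    _ = |g ⬝ᵥ A *ᵥ x| := by rw [← abs_mul, hDx]
    _ ≤ Fintype.card m * ((Fintype.card m * a) ^ (Fintype.card n - 1) * b) :=
        abs_dotProduct_le hg hx
    _ ≤ Fintype.card m * ((Fintype.card m * a) ^ (Fintype.card n - 1) * b) * a :=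
        le_mul_of_one_le_right (by positivity) ha'
    _ = (Fintype.card m * a) ^ (Fintype.card n - 1 + 1) * b := by ring
    _ = _ := by rw [hn]

theorem exists_linearIndepOn_row_forall_ker {R : Type*} [CommRing R] [IsDomain R]
    (A : Matrix m n R) :
    ∃ s : Set m, LinearIndepOn R A.row s ∧
      ∀ y : n → R, (∀ i ∈ s, A i ⬝ᵥ y = 0) → A *ᵥ y = 0 := by
  obtain ⟨s, hli, hspan⟩ := exists_maximal_linearIndepOn R A.row
  refine ⟨s, hli, fun y hy => funext fun i => ?_⟩
  by_cases hi : i ∈ s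
  · exact hy i hi
  obtain ⟨t, ht, hmem⟩ := hspan i hi
  have hker : Submodule.span R (A.row '' s) ≤ LinearMap.ker ((dotProductBilin R R).flip y) := by
    rw [Submodule.span_le]
    rintro _ ⟨i, hi, rfl⟩
    exact hy i hi
  have hti : t * (A i ⬝ᵥ y) = 0 := by
    rw [← smul_eq_mul, ← smul_dotProduct]
    exact hker hmem
  exact (mul_eq_zero.1 hti).resolve_left ht

theorem exists_ker_le_or_forall_abs_le [Fintype m] {A : Matrix m n ℤ} (ha : 1 ≤ a)
    (hA : ∀ i j, |A i j| ≤ a) :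
    (∃ y : n → ℤ, y ≠ 0 ∧ A *ᵥ y = 0 ∧
      ∀ j, |y j| ≤ ((Fintype.card n * a) ^ Fintype.card m : ℤ)) ∨
    ∀ (x : n → ℤ) (b : ℕ), (∀ i, |(A *ᵥ x) i| ≤ b) →
      ∀ j, |x j| ≤ ((Fintype.card n * a) ^ Fintype.card m * b : ℤ) := by
  classical
  obtain ⟨s, hli, hker⟩ := exists_linearIndepOn_row_forall_ker A
  have hs_m : Fintype.card s ≤ Fintype.card m := Fintype.card_subtype_le _
  have hs_n : Fintype.card s ≤ Fintype.card n := by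
    simpa using LinearIndependent.fintype_card_le_finrank hli
  have one_le_base (j : n) : (1 : ℤ) ≤ Fintype.card n * a := by
    exact_mod_cast Nat.mul_pos (Fintype.card_pos_iff.2 ⟨j⟩) ha
  let R : Matrix s n ℤ := A.submatrix Subtype.val id
  have hR : ∀ i j, |R i j| ≤ a := fun _ _ => hA _ _
  rcases hs_n.lt_or_eq with hlt | heq
  · obtain ⟨y, hy0, hRy, hy⟩ := exists_ne_zero_mulVec_eq_zero_of_card_lt ha hR hlt
    refine .inl ⟨y, hy0, hker y fun i hi => congrFun hRy ⟨i, hi⟩, fun j => (hy j).trans ?_⟩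
    exact pow_le_pow_right₀ (one_le_base j) hs_m
  · refine .inr fun x b hx j => ?_
    have hxj := abs_le_of_linearIndependent_row ha hR hli heq.ge (fun i => hx i) j
    rw [heq] at hxj
    refine hxj.trans ?_
    gcongr
    exacts [one_le_base j, heq ▸ hs_m]

theorem mulVec_extend {R s : Type*} [NonUnitalNonAssocSemiring R] [Fintype s] (A : Matrix m n R)
    {f : s → n} (hf : f.Injective) (y : s → R) :
    A *ᵥ Function.extend f y 0 = A.submatrix id f *ᵥ y := by
  funext i
  refine (Fintype.sum_of_injective f hf _ _ (fun j hj => ?_) fun t => ?_).symm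
  · rw [Function.extend_apply' _ _ _ hj, Pi.zero_apply, mul_zero]
  · rw [hf.extend_apply]
    rfl

theorem abs_submatrix_mulVec_le {A : Matrix m n ℤ} {M : ℕ} (hA : ∀ i j, |A i j| ≤ a)
    {x : n → ℤ} (hb : ∀ i, |(A *ᵥ x) i| ≤ b) (S : Set n) [Fintype S] (hx : ∀ j ∉ S, |x j| ≤ M)
    (i : m) :
    |(A.submatrix id (Subtype.val : S → n) *ᵥ fun j => x j) i| ≤
      (b + Fintype.card n * (a * M) : ℤ) := by
  let xS : n → ℤ := Function.extend (Subtype.val : S → n) (fun j => x j) 0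
  have hrest (j) : |(x - xS) j| ≤ M := by
    by_cases hj : j ∈ S
    · have : xS j = x j := Subtype.val_injective.extend_apply _ _ ⟨j, hj⟩
      simp [this]
    · have : xS j = 0 := Function.extend_apply' _ _ _ (by simpa using hj)
      simpa [this] using hx j hj
  have hsplit : A *ᵥ xS = A *ᵥ x - A *ᵥ (x - xS) := by rw [mulVec_sub, sub_sub_cancel]
  rw [← mulVec_extend A Subtype.val_injective, hsplit]
  exact (abs_sub _ _).trans (add_le_add (hb i) (abs_dotProduct_le (hA i) hrest))

theorem abs_le_of_forall_ker_eq_zero [Fintype m] {A : Matrix m n ℤ} (ha : 1 ≤ a)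
    (hA : ∀ i j, |A i j| ≤ a) {e : n → ℕ}
    (he : ∀ y : n → ℤ, A *ᵥ y = 0 → (∀ j, |y j| ≤ e j) → y = 0) (S : Set n) [Fintype S]
    (hS : ∀ j ∈ S, (Fintype.card n * a) ^ Fintype.card m ≤ e j) {x : S → ℤ}
    (hx : ∀ i, |(A.submatrix id (Subtype.val : S → n) *ᵥ x) i| ≤ b) (j : S) :
    |x j| ≤ ((Fintype.card n * a) ^ Fintype.card m * b : ℤ) := by
  have hpow : ((Fintype.card S * a) ^ Fintype.card m : ℤ) ≤
      (Fintype.card n * a) ^ Fintype.card m := by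
    gcongr
    exact Fintype.card_le_of_injective _ Subtype.val_injective
  rcases exists_ker_le_or_forall_abs_le (A := A.submatrix id (Subtype.val : S → n)) ha
    (fun _ _ => hA _ _) with ⟨y, hy0, hAy, hy⟩ | hbound
  · have hdom (j) : |Function.extend Subtype.val y 0 j| ≤ (e j : ℤ) := by
      by_cases hj : j ∈ S
      · rw [Subtype.val_injective.extend_apply y 0 ⟨j, hj⟩]
        exact ((hy _).trans hpow).trans (by exact_mod_cast hS j hj)
      · rw [Function.extend_apply' _ _ _ (by simpa using hj)]
        simp
    have hext := he _ ((mulVec_extend A Subtype.val_injective y).trans hAy) hdom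
    refine absurd (funext fun j => ?_) hy0
    simpa [Subtype.val_injective.extend_apply] using congrFun hext j
  · exact (hbound x b hx j).trans (by gcongr)

theorem exists_solution_le [Fintype m] {A : Matrix m n ℤ} (ha : 1 ≤ a)
    (hA : ∀ i j, |A i j| ≤ a) {c : m → ℤ} (hc : ∀ i, |c i| ≤ b)
    (h : ∃ x : n → ℕ, A *ᵥ (fun j => (x j : ℤ)) = c) :
    ∃ e : n → ℕ, A *ᵥ (fun j => (e j : ℤ)) = c ∧ ∀ j, e j ≤
      (Fintype.card n * a) ^ Fintype.card m *
        (b + Fintype.card n * a * (Fintype.card n * a) ^ Fintype.card m) := by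
  classical
  obtain ⟨e, rfl, hker⟩ := exists_solution_forall_ker_eq_zero A h
  refine ⟨e, rfl, fun j => ?_⟩
  let M := (Fintype.card n * a) ^ Fintype.card m
  let S : Set n := {j | M < e j}
  by_cases hj : j ∈ S
  · have hresidual := abs_submatrix_mulVec_le hA hc S (M := M) fun j hj => by simpa [S] using hj
    have hej := abs_le_of_forall_ker_eq_zero ha hA hker S (fun j hj => le_of_lt hj)
      (b := b + Fintype.card n * (a * M)) (by exact_mod_cast hresidual) ⟨j, hj⟩
    rw [mul_assoc]
    exact_mod_cast hej
  · have hejM : e j ≤ M := not_lt.1 hj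
    have hn : 0 < Fintype.card n := Fintype.card_pos_iff.2 ⟨j⟩
    exact hejM.trans (Nat.le_mul_of_pos_right _ (by positivity))

end IntegerMatrix

theorem pow_mul_add_mul_pow_le (q b d : ℕ) :
    q ^ d * (b + q * q ^ d) ≤ (q + b + 1) ^ (2 * d + 1) := by
  set N := q + b + 1
  have hq : q ≤ N := by omega
  calc q ^ d * (b + q * q ^ d) ≤ N ^ d * (b * N ^ d + q * N ^ d) := by
        gcongr
        exact Nat.le_mul_of_pos_right _ (by positivity)
    _ = N ^ d * ((q + b) * N ^ d) := by ring
    _ ≤ N ^ d * (N * N ^ d) := by gcongr; omega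
    _ = N ^ (2 * d + 1) := by ring

theorem abs_apply_le_vnorm {m : ℕ} (v : Fin m → ℤ) (i : Fin m) : |v i| ≤ vnorm v := by
  rw [Int.abs_eq_natAbs]
  exact_mod_cast Finset.le_sup (f := fun i => (v i).natAbs) (Finset.mem_univ i)

theorem exists_mnorm_eq_mul {d k : ℕ} (A : Matrix (Fin d) (Fin k) ℤ) :
    ∃ a : ℕ, mnorm A = k * a ∧ ∀ i j, |A i j| ≤ a := by
  refine ⟨_, rfl, fun i j => ?_⟩
  rw [Int.abs_eq_natAbs]
  exact_mod_cast Finset.le_sup (f := fun p : Fin d × Fin k => (A p.1 p.2).natAbs)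
    (Finset.mem_univ (i, j))

/-- A feasible system of linear Diophantine equations
`A·x = c` has a solution over ℕ of norm at most `(‖A‖ + ‖c‖ + 1)^{c₀·d}`. -/
theorem statement12 :
    ∃ c₀ : ℕ, ∀ d k : ℕ, 1 ≤ d → 1 ≤ k →
      ∀ (A : Matrix (Fin d) (Fin k) ℤ) (c : Fin d → ℤ),
        (∃ x : Fin k → ℕ, A.mulVec (fun j => (x j : ℤ)) = c) →
        ∃ e : Fin k → ℕ, A.mulVec (fun j => (e j : ℤ)) = c ∧
          (Finset.univ.sup fun j => e j) ≤ (mnorm A + vnorm c + 1) ^ (c₀ * d) := by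
  refine ⟨3, fun d k hd _ A c hx => ?_⟩
  obtain ⟨a, hmnorm, hA⟩ := exists_mnorm_eq_mul A
  rcases Nat.eq_zero_or_pos a with rfl | ha
  · have hA0 : A = 0 := by
      ext i j
      simpa using hA i j
    obtain ⟨x, rfl⟩ := hx
    exact ⟨0, by simp [hA0], by simp⟩
  obtain ⟨e, he, hle⟩ := exists_solution_le ha hA (abs_apply_le_vnorm c) hx
  refine ⟨e, he, Finset.sup_le fun j _ => ?_⟩
  calc e j ≤ (k * a) ^ d * (vnorm c + k * a * (k * a) ^ d) := by simpa using hle j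
    _ ≤ (k * a + vnorm c + 1) ^ (2 * d + 1) := pow_mul_add_mul_pow_le _ _ _
    _ ≤ (mnorm A + vnorm c + 1) ^ (3 * d) := by
        rw [hmnorm]
        exact Nat.pow_le_pow_right (Nat.succ_pos _) (by omega)

end ILP
end

section
/- Let V = (Q,T) be a d-VASS, let u ∈ ℕ^d, let q ∈ Q and let β ∈ T^m be a cycle from q to q. Then there exist vectors a, c ∈ ℤ^{d+1} with ‖a‖ ≤ max(1, m·‖T‖) and ‖c‖ ≤ 2·m·‖T‖ + ‖u‖ + 1 such that for every e ∈ ℕ: (a_i·e ≥ c_i holds for all 1 ≤ i ≤ d+1) if and only if (e ≥ 1 and q(u) →^{β^e}_{ℕ^d} q(u + e·δ(β))). -/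
namespace VASS

/-!
The run `β^e` from `u` stays in `ℕ^d` iff `u` plus the componentwise infimum of the displacements
of all prefixes of `β^e` is nonnegative. A prefix of `β^e` is `β^k` followed by a prefix of `β`, so
for `e ≥ 1` this infimum is that of `β` plus `(e - 1) • (δ(β) ⊓ 0)`: a component in which `δ(β)` is
nonnegative is lowest in the first iteration of `β`, any other one in the last. The condition is
therefore one linear inequality in `e` per component, and `e ≥ 1` is the remaining inequality.
-/

section Norm

variable {n : ℕ}

lemma vnorm_le_iff {z : Vec n} {b : ℕ} : vnorm z ≤ b ↔ ∀ i, (z i).natAbs ≤ b := by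
  simp [vnorm]

lemma natAbs_apply_le_vnorm (z : Vec n) (i : Fin n) : (z i).natAbs ≤ vnorm z :=
  vnorm_le_iff.mp le_rfl i

lemma vnorm_zero : vnorm (0 : Vec n) = 0 := by
  simp [vnorm]

lemma vnorm_add_le (y z : Vec n) : vnorm (y + z) ≤ vnorm y + vnorm z :=
  vnorm_le_iff.mpr fun i => (Int.natAbs_add_le _ _).trans <|
    add_le_add (natAbs_apply_le_vnorm y i) (natAbs_apply_le_vnorm z i)

lemma vnorm_sub_le (y z : Vec n) : vnorm (y - z) ≤ vnorm y + vnorm z :=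
  vnorm_le_iff.mpr fun i => (Int.natAbs_sub_le _ _).trans <|
    add_le_add (natAbs_apply_le_vnorm y i) (natAbs_apply_le_vnorm z i)

lemma vnorm_sub_le_of_le_of_nonpos {y z : Vec n} (hyz : y ≤ z) (hz : z ≤ 0) :
    vnorm (z - y) ≤ vnorm y := by
  refine vnorm_le_iff.mpr fun i => le_trans ?_ (natAbs_apply_le_vnorm y i)
  have hyz_i : y i ≤ z i := hyz i
  have hz_i : z i ≤ 0 := hz i
  rw [Pi.sub_apply]
  omega

lemma vnorm_inf_zero_le (z : Vec n) : vnorm (z ⊓ 0) ≤ vnorm z := by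
  refine vnorm_le_iff.mpr fun i => le_trans ?_ (natAbs_apply_le_vnorm z i)
  simp only [Pi.inf_apply, Pi.zero_apply]
  omega

lemma vnorm_cons_le_iff {x : ℤ} {z : Vec n} {b : ℕ} :
    vnorm (Fin.cons x z : Vec (n + 1)) ≤ b ↔ x.natAbs ≤ b ∧ vnorm z ≤ b := by
  simp only [vnorm_le_iff, Fin.forall_fin_succ, Fin.cons_zero, Fin.cons_succ]

end Norm

section Words

variable {d : ℕ}

lemma disp_nil : disp ([] : List (Trans d)) = 0 := rfl

lemma disp_cons (t : Trans d) (π : List (Trans d)) : disp (t :: π) = t.2.1 + disp π :=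
  List.sum_cons

lemma disp_flatten_replicate (β : List (Trans d)) (e : ℕ) :
    disp (List.replicate e β).flatten = (e : ℤ) • disp β := by
  simp [disp, List.map_flatten, List.sum_flatten]

lemma IsPathFrom.append {p q r : ℕ} {π ρ : List (Trans d)} (hπ : IsPathFrom p q π)
    (hρ : IsPathFrom q r ρ) : IsPathFrom p r (π ++ ρ) := by
  induction π generalizing p with
  | nil => cases hπ; exact hρ
  | cons t π ih => exact ⟨hπ.1, ih hπ.2⟩

lemma IsPathFrom.flatten_replicate {q : ℕ} {β : List (Trans d)} (hβ : IsPathFrom q q β) (e : ℕ) :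
    IsPathFrom q q (List.replicate e β).flatten := by
  induction e with
  | zero => rfl
  | succ e ih => exact hβ.append ih

lemma vnorm_le_tnorm {T : Finset (Trans d)} {t : Trans d} (ht : t ∈ T) : vnorm t.2.1 ≤ tnorm T :=
  Finset.le_sup (f := fun t : Trans d => vnorm t.2.1) ht

lemma vnorm_disp_le {T : Finset (Trans d)} {π : List (Trans d)} (hπ : ∀ t ∈ π, t ∈ T) :
    vnorm (disp π) ≤ π.length * tnorm T := by
  induction π with
  | nil => simp [disp_nil, vnorm_zero]
  | cons t π ih =>
    rw [List.forall_mem_cons] at hπ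
    calc vnorm (disp (t :: π)) ≤ vnorm t.2.1 + vnorm (disp π) := vnorm_add_le _ _
      _ ≤ tnorm T + π.length * tnorm T := add_le_add (vnorm_le_tnorm hπ.1) (ih hπ.2)
      _ = (t :: π).length * tnorm T := by rw [List.length_cons]; ring

end Words

section PrefixInf

variable {d : ℕ}

/-- The componentwise infimum of the displacements of all prefixes of a word, the empty prefix
included: how deep a run along the word dips in each component. It is defined by recursion on the
word; `le_prefixInf_iff` is its characterization as an infimum. -/
def prefixInf : List (Trans d) → Vec d
  | [] => 0
  | t :: π => (t.2.1 + prefixInf π) ⊓ 0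

lemma le_prefixInf_iff {w : Vec d} {π : List (Trans d)} :
    w ≤ prefixInf π ↔ ∀ i, w ≤ disp (π.take i) := by
  induction π generalizing w with
  | nil => simp [prefixInf, disp_nil]
  | cons t π ih =>
    rw [prefixInf, le_inf_iff, ← sub_le_iff_le_add', ih, and_comm,
      ← Nat.and_forall_add_one (p := fun i => w ≤ disp ((t :: π).take i))]
    simp only [List.take_zero, List.take_succ_cons, disp_nil, disp_cons, sub_le_iff_le_add']

lemma prefixInf_nonpos (π : List (Trans d)) : prefixInf π ≤ 0 := by
  simpa [disp_nil] using le_prefixInf_iff.mp le_rfl 0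

lemma prefixInf_le_disp (π : List (Trans d)) : prefixInf π ≤ disp π := by
  simpa using le_prefixInf_iff.mp (le_refl (prefixInf π)) π.length

lemma vnorm_prefixInf_le {T : Finset (Trans d)} {π : List (Trans d)} (hπ : ∀ t ∈ π, t ∈ T) :
    vnorm (prefixInf π) ≤ π.length * tnorm T := by
  induction π with
  | nil => simp [prefixInf, vnorm_zero]
  | cons t π ih =>
    rw [List.forall_mem_cons] at hπ
    calc vnorm (prefixInf (t :: π)) ≤ vnorm (t.2.1 + prefixInf π) := vnorm_inf_zero_le _
      _ ≤ vnorm t.2.1 + vnorm (prefixInf π) := vnorm_add_le _ _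
      _ ≤ tnorm T + π.length * tnorm T := add_le_add (vnorm_le_tnorm hπ.1) (ih hπ.2)
      _ = (t :: π).length * tnorm T := by rw [List.length_cons]; ring

lemma prefixInf_append (π ρ : List (Trans d)) :
    prefixInf (π ++ ρ) = prefixInf π ⊓ (disp π + prefixInf ρ) := by
  induction π with
  | nil => simp [prefixInf, disp_nil, prefixInf_nonpos]
  | cons t π ih =>
    rw [List.cons_append, prefixInf, ih, prefixInf, disp_cons, add_inf, add_assoc, inf_right_comm]

lemma add_smul_inf_zero_inf_zero (z : Vec d) (k : ℕ) :
    (z + (k : ℤ) • (z ⊓ 0)) ⊓ 0 = ((k + 1 : ℕ) : ℤ) • (z ⊓ 0) := by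
  funext i
  simp only [Pi.inf_apply, Pi.add_apply, Pi.smul_apply, Pi.zero_apply, smul_eq_mul]
  push_cast
  rcases le_total (z i) 0 with hz | hz
  · rw [inf_of_le_left hz, inf_of_le_left (by nlinarith)]
    ring
  · simp [hz]

lemma prefixInf_flatten_replicate_succ (β : List (Trans d)) (k : ℕ) :
    prefixInf (List.replicate (k + 1) β).flatten = prefixInf β + (k : ℤ) • (disp β ⊓ 0) := by
  induction k with
  | zero => simp
  | succ k ih =>
    calc prefixInf (List.replicate (k + 1 + 1) β).flatten
        = prefixInf β ⊓ (disp β + (prefixInf β + (k : ℤ) • (disp β ⊓ 0))) := by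
          rw [List.replicate_succ, List.flatten_cons, prefixInf_append, ih]
      _ = prefixInf β + (disp β + (k : ℤ) • (disp β ⊓ 0)) ⊓ 0 := by
          rw [add_inf, add_zero, inf_comm, add_left_comm]
      _ = prefixInf β + ((k + 1 : ℕ) : ℤ) • (disp β ⊓ 0) := by
          rw [add_smul_inf_zero_inf_zero]

end PrefixInf

section Runs

variable {d : ℕ}

lemma mem_natSet_iff {v : Vec d} : v ∈ NatSet d ↔ 0 ≤ v := Iff.rfl

lemma prefixes_mem_natSet_iff {u : Vec d} {π : List (Trans d)} :
    (u ∈ NatSet d ∧ ∀ i, 1 ≤ i → i ≤ π.length → u + disp (π.take i) ∈ NatSet d) ↔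
      0 ≤ u + prefixInf π := by
  simp only [mem_natSet_iff, ← neg_le_iff_add_nonneg', le_prefixInf_iff]
  constructor
  · rintro ⟨hu, h⟩ i
    rw [List.take_eq_take_min]
    rcases Nat.eq_zero_or_pos (min i π.length) with hi | hi
    · rw [hi, List.take_zero, disp_nil]
      exact neg_nonpos.mpr hu
    · exact h _ hi (min_le_right _ _)
  · intro h
    exact ⟨neg_nonpos.mp (h 0), fun i _ _ => h i⟩

lemma run_flatten_replicate_iff {T : Finset (Trans d)} {u : Vec d} {q e : ℕ}
    {β : List (Trans d)} (hβT : ∀ t ∈ β, t ∈ T) (hβ : IsPathFrom q q β) :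
    Run T (NatSet d) q u q (u + (e : ℤ) • disp β) (List.replicate e β).flatten ↔
      0 ≤ u + prefixInf (List.replicate e β).flatten := by
  have mem_T : ∀ t ∈ (List.replicate e β).flatten, t ∈ T := by
    intro t ht
    obtain ⟨π, hπ, htπ⟩ := List.mem_flatten.mp ht
    exact hβT t (List.eq_of_mem_replicate hπ ▸ htπ)
  rw [← prefixes_mem_natSet_iff]
  exact ⟨fun ⟨_, _, hu, _, h⟩ => ⟨hu, h⟩,
    fun ⟨hu, h⟩ => ⟨mem_T, hβ.flatten_replicate e, hu, by rw [disp_flatten_replicate], h⟩⟩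

lemma nonneg_add_prefixInf_flatten_replicate_iff {u : Vec d} {β : List (Trans d)} {e : ℕ}
    (he : 1 ≤ e) :
    0 ≤ u + prefixInf (List.replicate e β).flatten ↔
      disp β ⊓ 0 - prefixInf β - u ≤ (e : ℤ) • (disp β ⊓ 0) := by
  obtain ⟨k, rfl⟩ := Nat.exists_eq_add_of_le' he
  rw [prefixInf_flatten_replicate_succ, Nat.cast_succ, add_smul, one_smul,
    ← sub_nonneg (a := _ + disp β ⊓ 0)]
  congr! 1
  abel

end Runs

lemma vnorm_disp_inf_zero_sub_prefixInf_sub_le {d : ℕ} {T : Finset (Trans d)}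
    {β : List (Trans d)} (hβT : ∀ t ∈ β, t ∈ T) (u : Vec d) :
    vnorm (disp β ⊓ 0 - prefixInf β - u) ≤ β.length * tnorm T + vnorm u := by
  have prefixInf_le : prefixInf β ≤ disp β ⊓ 0 :=
    le_inf (prefixInf_le_disp β) (prefixInf_nonpos β)
  calc vnorm (disp β ⊓ 0 - prefixInf β - u)
      ≤ vnorm (disp β ⊓ 0 - prefixInf β) + vnorm u := vnorm_sub_le _ _
    _ ≤ vnorm (prefixInf β) + vnorm u := by
        gcongr
        exact vnorm_sub_le_of_le_of_nonpos prefixInf_le inf_le_right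
    _ ≤ β.length * tnorm T + vnorm u := by
        gcongr
        exact vnorm_prefixInf_le hβT

theorem statement13_general (d : ℕ) (T : Finset (Trans d)) (u : Vec d) (q : ℕ)
    (β : List (Trans d)) (hβT : ∀ t ∈ β, t ∈ T) (hcyc : IsPathFrom q q β) :
    ∃ a c : Fin (d + 1) → ℤ,
      vnorm a ≤ max 1 (β.length * tnorm T) ∧
      vnorm c ≤ max 1 (β.length * tnorm T + vnorm u) ∧
      ∀ e : ℕ, (∀ i, c i ≤ a i * (e : ℤ)) ↔
        (1 ≤ e ∧
          Run T (NatSet d) q u q (u + (e : ℤ) • disp β)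
            ((List.replicate e β).flatten)) := by
  refine ⟨Fin.cons 1 (disp β ⊓ 0), Fin.cons 1 (disp β ⊓ 0 - prefixInf β - u),
    vnorm_cons_le_iff.mpr ⟨le_max_left _ _, le_max_of_le_right ?_⟩,
    vnorm_cons_le_iff.mpr ⟨le_max_left _ _, le_max_of_le_right ?_⟩, fun e => ?_⟩
  · exact (vnorm_inf_zero_le _).trans (vnorm_disp_le hβT)
  · exact vnorm_disp_inf_zero_sub_prefixInf_sub_le hβT u
  · rw [run_flatten_replicate_iff hβT hcyc,
      and_congr_right nonneg_add_prefixInf_flatten_replicate_iff, Fin.forall_fin_succ]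
    simp [Pi.le_def, mul_comm]

/-- cycle-iteration inequalities. For a cycle `β` of length
`m` from `q` to `q` and `u ∈ ℕ^d`, there is a system of `d+1` linear Diophantine
inequalities in one unknown, with small coefficients, whose solutions are
exactly the `e ≥ 1` such that `q(u) →^{β^e}_{ℕ^d} q(u + e·δ(β))`. -/
theorem statement13 (d : ℕ) (Q : Finset ℕ) (T : Finset (Trans d))
    (hT : ∀ t ∈ T, t.1 ∈ Q ∧ t.2.2 ∈ Q)
    (u : Vec d) (hu : u ∈ NatSet d) (q : ℕ) (hq : q ∈ Q)
    (m : ℕ) (β : List (Trans d)) (hβT : ∀ t ∈ β, t ∈ T)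
    (hm : β.length = m) (hcyc : IsPathFrom q q β) (hne : β ≠ []) :
    ∃ a c : Fin (d + 1) → ℤ,
      vnorm a ≤ max 1 (m * tnorm T) ∧
      vnorm c ≤ 2 * m * tnorm T + vnorm u + 1 ∧
      ∀ e : ℕ, (∀ i, c i ≤ a i * (e : ℤ)) ↔
        (1 ≤ e ∧
          Run T (NatSet d) q u q (u + (e : ℤ) • disp β)
            ((List.replicate e β).flatten)) := by
  subst hm
  obtain ⟨a, c, ha, hc, h⟩ := statement13_general d T u q β hβT hcyc
  exact ⟨a, c, ha, hc.trans (max_le (by omega) (by rw [mul_assoc]; omega)), h⟩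

end VASS
end
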